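/- arXiv:2504.06506 — 2 statements merged into one kernel-verified Lean document; each statement's English description precedes it below -/
import Mathlib

section
/- Let S be a densely defined, closed, symmetric operator in a complex Hilbert space H whose deficiency indices n₊(S) = dim ker(S* − i) and n₋(S) = dim ker(S* + i) are both finite. Then for every k ∈ ℕ, k ≥ 1, the power S^{2k+1} is densely defined, symmetric, and closed, it satisfies ‖S^{2k+1}f ± i f‖ ≥ ‖f‖ for all f ∈ dom(S^{2k+1}) (both signs), and its deficiency indices are n₊(S^{2k+1}) = k·(n₊(S) + n₋(S)) + n₊(S) and n₋(S^{2k+1}) = k·(n₊(S) + n₋(S)) + n₋(S). -/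
open scoped InnerProductSpace
open Cardinal

noncomputable section

variable {E F G H : Type*}
  [NormedAddCommGroup E] [InnerProductSpace ℂ E] [CompleteSpace E]
  [NormedAddCommGroup F] [InnerProductSpace ℂ F] [CompleteSpace F]
  [NormedAddCommGroup G] [InnerProductSpace ℂ G] [CompleteSpace G]
  [NormedAddCommGroup H] [InnerProductSpace ℂ H] [CompleteSpace H]

/-- The product (composition) `T₂T₁` of two partially defined linear operators, with domain
`dom(T₂T₁) = {f ∈ dom T₁ | T₁ f ∈ dom T₂}` and value `(T₂T₁) f = T₂ (T₁ f)`. -/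
def pcomp {E F G : Type*}
    [NormedAddCommGroup E] [InnerProductSpace ℂ E]
    [NormedAddCommGroup F] [InnerProductSpace ℂ F]
    [NormedAddCommGroup G] [InnerProductSpace ℂ G]
    (T₂ : F →ₗ.[ℂ] G) (T₁ : E →ₗ.[ℂ] F) : E →ₗ.[ℂ] G where
  domain := (T₂.domain.comap T₁.toFun).map T₁.domain.subtype
  toFun := T₂.toFun ∘ₗ
    (T₁.toFun.restrict (p := T₂.domain.comap T₁.toFun) (q := T₂.domain) fun _ hx => hx) ∘ₗ
    (Submodule.equivMapOfInjective T₁.domain.subtype (Submodule.injective_subtype _)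
      (T₂.domain.comap T₁.toFun)).symm.toLinearMap

/-- The identity as a partially defined operator (domain all of `X`). -/
def pid (X : Type*) [NormedAddCommGroup X] [InnerProductSpace ℂ X] : X →ₗ.[ℂ] X :=
  ⟨⊤, (⊤ : Submodule ℂ X).subtype⟩

/-- Powers of a partially defined operator: `S⁰ = I`, `S¹ = S`, and recursively
`dom(S^m) = {f ∈ dom(S^{m-1}) | S^{m-1} f ∈ dom S}`, `S^m f = S (S^{m-1} f)`. -/
def pmapPow {X : Type*} [NormedAddCommGroup X] [InnerProductSpace ℂ X]
    (S : X →ₗ.[ℂ] X) : ℕ → X →ₗ.[ℂ] X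
  | 0 => pid X
  | 1 => S
  | (n + 2) => pcomp S (pmapPow S (n + 1))

/-- The kernel of `A - μ·I` as a submodule of the domain of `A`. -/
def kerAt {X : Type*} [NormedAddCommGroup X] [InnerProductSpace ℂ X]
    (A : X →ₗ.[ℂ] X) (μ : ℂ) : Submodule ℂ A.domain :=
  LinearMap.ker (A.toFun - μ • A.domain.subtype)

/-- Deficiency index `n₊(S) = dim ker(S* - i·I)`, a Hilbert-space dimension as a cardinal. -/
def nPlus (S : H →ₗ.[ℂ] H) : Cardinal := Module.rank ℂ (kerAt S.adjoint Complex.I)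

/-- Deficiency index `n₋(S) = dim ker(S* + i·I)`, a Hilbert-space dimension as a cardinal. -/
def nMinus (S : H →ₗ.[ℂ] H) : Cardinal := Module.rank ℂ (kerAt S.adjoint (-Complex.I))

/-- The symmetry condition `⟪Sf, g⟫ = ⟪f, Sg⟫` for all `f, g` in the domain of `S`. -/
def IsSymmP {X : Type*} [NormedAddCommGroup X] [InnerProductSpace ℂ X]
    (S : X →ₗ.[ℂ] X) : Prop :=
  ∀ f g : S.domain, ⟪S f, (g : X)⟫_ℂ = ⟪(f : X), S g⟫_ℂ

/-- The defect number of `T` at `0`: `def(T,0) = dim ker(T*)`, as a cardinal. -/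
def defect0 (T : E →ₗ.[ℂ] F) : Cardinal := Module.rank ℂ (LinearMap.ker T.adjoint.toFun)

/-- `0` belongs to the field of regularity of `T`: there is `c > 0` with
`‖T f‖ ≥ c ‖f‖` for all `f ∈ dom T`. -/
def ZeroRegular {X Y : Type*} [NormedAddCommGroup X] [InnerProductSpace ℂ X]
    [NormedAddCommGroup Y] [InnerProductSpace ℂ Y] (T : X →ₗ.[ℂ] Y) : Prop :=
  ∃ c : ℝ, 0 < c ∧ ∀ f : T.domain, c * ‖(f : X)‖ ≤ ‖T f‖

/-- `T` is Fredholm: densely defined, closed, with closed range, and finite-dimensional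
kernel and cokernel (= kernel of the adjoint). -/
def IsFredholmP (T : E →ₗ.[ℂ] F) : Prop :=
  Dense (T.domain : Set E) ∧ T.IsClosed ∧
    IsClosed ((LinearMap.range T.toFun : Submodule ℂ F) : Set F) ∧
    Module.rank ℂ (LinearMap.ker T.toFun) < ℵ₀ ∧
    Module.rank ℂ (LinearMap.ker T.adjoint.toFun) < ℵ₀

/-- `T` is left semi-Fredholm: densely defined, closed, with closed range and
finite-dimensional kernel. -/
def IsLeftSemiFredholmP (T : E →ₗ.[ℂ] F) : Prop :=
  Dense (T.domain : Set E) ∧ T.IsClosed ∧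
    IsClosed ((LinearMap.range T.toFun : Submodule ℂ F) : Set F) ∧
    Module.rank ℂ (LinearMap.ker T.toFun) < ℵ₀

/-- The (semi-)Fredholm index `ind(T) = dim ker T - dim ker T*` (as an integer,
via `finrank`). -/
def indP (T : E →ₗ.[ℂ] F) : ℤ :=
  (Module.finrank ℂ (LinearMap.ker T.toFun) : ℤ) -
    (Module.finrank ℂ (LinearMap.ker T.adjoint.toFun) : ℤ)

/-!
For `n = 2k+1` and `w` nonreal, `S^n - w` is the product of the operators `S - z` over the `n`-th
roots `z` of `w`. Each `S - z` is bounded below, with closed range because `S` is symmetric and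
closed. Under composition, injectivity makes the codimensions of the ranges add up: a dense domain
meets a closed range of finite codimension in a subspace of the same codimension; in the infinite
case it is enough that commuting factors have a product with range inside both ranges. Since
`codim ran(S - z)` is constant on each open half plane, it remains to count roots: `k + 1` of them
lie in the half plane of `w` and `k` in the opposite one. At `w = ∓i` the codimension of
`ran(S^n - w)` is `n₊(S^n)`, respectively `n₋(S^n)`.
-/

universe u

section Submodule

open Submodule

section TopologicalVectorSpace

variable {𝕜 V : Type*} [NontriviallyNormedField 𝕜] [CompleteSpace 𝕜] [AddCommGroup V]
  [TopologicalSpace V] [IsTopologicalAddGroup V] [Module 𝕜 V] [ContinuousSMul 𝕜 V]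
  {D K : Submodule 𝕜 V}

theorem codisjoint_of_dense_of_isClosed [FiniteDimensional 𝕜 (V ⧸ K)]
    (hD : Dense (D : Set V)) (hK : IsClosed (K : Set V)) : Codisjoint D K := by
  have hcl : IsClosed ((D ⊔ K : Submodule 𝕜 V) : Set V) :=
    isClosed_mono_of_finiteDimensional_quotient hK le_sup_right
  have hdense : Dense ((D ⊔ K : Submodule 𝕜 V) : Set V) := hD.mono (le_sup_left : D ≤ D ⊔ K)
  rw [codisjoint_iff, ← SetLike.coe_set_eq, ← hcl.closure_eq, hdense.closure_eq, top_coe]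

theorem subset_closure_inf_of_dense [FiniteDimensional 𝕜 (V ⧸ K)]
    (hD : Dense (D : Set V)) (hK : IsClosed (K : Set V)) :
    (K : Set V) ⊆ closure ((D ⊓ K : Submodule 𝕜 V) : Set V) := by
  -- The projection onto `K` along a complement contained in `D` is continuous and preserves `D`.
  obtain ⟨F, hFD, hF⟩ := (codisjoint_of_dense_of_isClosed hD hK).exists_isCompl
  have hKF : IsTopCompl K F := hF.symm.isTopCompl_of_finiteDimensional_quotient hK
  have hmaps : Set.MapsTo (K.projectionL F hKF) D (D ⊓ K : Submodule 𝕜 V) := fun x hx => by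
    refine ⟨?_, projectionL_apply_mem hKF x⟩
    rw [projectionL_eq_self_sub_projectionL hKF.symm]
    exact D.sub_mem hx (hFD (projectionL_apply_mem hKF.symm x))
  intro x hx
  have hfix : K.projectionL F hKF x = x := projectionL_apply_left hKF ⟨x, hx⟩
  exact hfix ▸ map_mem_closure (K.projectionL F hKF).continuous (hD x) hmaps

end TopologicalVectorSpace

section Rank

variable {𝕜 : Type*} {V W : Type*} [Field 𝕜] [AddCommGroup V] [Module 𝕜 V]
  [AddCommGroup W] [Module 𝕜 W]

theorem rank_le_rank_quotient_of_disjoint {U N : Submodule 𝕜 V} (h : Disjoint U N) :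
    Module.rank 𝕜 U ≤ Module.rank 𝕜 (V ⧸ N) :=
  LinearMap.rank_le_of_injective (N.mkQ.domRestrict U) <|
    LinearMap.injective_domRestrict_iff.2 (by rwa [ker_mkQ])

theorem rank_quotient_comap_subtype_le (U N : Submodule 𝕜 V) :
    Module.rank 𝕜 (U ⧸ N.comap U.subtype) ≤ Module.rank 𝕜 (V ⧸ N) :=
  LinearMap.rank_le_of_injective (mapQ _ _ U.subtype le_rfl) <| by
    rw [← LinearMap.ker_eq_bot, ker_mapQ, mkQ_map_self]

theorem rank_quotient_comap_subtype {U N : Submodule 𝕜 V} (h : Codisjoint N U) :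
    Module.rank 𝕜 (U ⧸ N.comap U.subtype) = Module.rank 𝕜 (V ⧸ N) := by
  refine (rank_quotient_comap_subtype_le U N).antisymm <|
    LinearMap.rank_le_of_surjective (mapQ _ _ U.subtype le_rfl) ?_
  rw [← LinearMap.range_eq_top, range_mapQ, range_subtype, map_mkQ_eq_top]
  exact h.eq_top

end Rank

theorem rank_quotient_map_of_injective {𝕜 : Type*} {V W : Type u} [Field 𝕜] [AddCommGroup V]
    [Module 𝕜 V] [AddCommGroup W] [Module 𝕜 W] {B : V →ₗ[𝕜] W} (hB : Function.Injective B)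
    (N : Submodule 𝕜 V) :
    Module.rank 𝕜 (W ⧸ N.map B) =
      Module.rank 𝕜 (W ⧸ LinearMap.range B) + Module.rank 𝕜 (V ⧸ N) := by
  have hker : LinearMap.ker ((N.map B).mkQ ∘ₗ B) = N := by
    rw [LinearMap.ker_comp, ker_mkQ, comap_map_eq_of_injective hB]
  rw [← rank_quotient_add_rank ((LinearMap.range B).map (N.map B).mkQ),
    (quotientQuotientEquivQuotient _ _ LinearMap.map_le_range).rank_eq, ← LinearMap.range_comp,
    ← (LinearMap.quotKerEquivRange _).rank_eq, hker]

end Submodule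

section Composition

variable {X Y Z : Type*}
  [NormedAddCommGroup X] [InnerProductSpace ℂ X] [NormedAddCommGroup Y] [InnerProductSpace ℂ Y]
  [NormedAddCommGroup Z] [InnerProductSpace ℂ Z]

theorem pcomp_apply {T₂ : Y →ₗ.[ℂ] Z} {T₁ : X →ₗ.[ℂ] Y} {x : T₁.domain}
    (hx : T₁ x ∈ T₂.domain) (hx' : (x : X) ∈ (pcomp T₂ T₁).domain) :
    pcomp T₂ T₁ ⟨x, hx'⟩ = T₂ ⟨T₁ x, hx⟩ := by
  have hsymm : (Submodule.equivMapOfInjective T₁.domain.subtype (Submodule.injective_subtype _)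
      (T₂.domain.comap T₁.toFun)).symm ⟨x, hx'⟩ = ⟨x, hx⟩ := by
    rw [LinearEquiv.symm_apply_eq]
    rfl
  exact congrArg (T₂.toFun ∘ₗ (T₁.toFun.restrict fun _ hx => hx)) hsymm

theorem mem_graph_pcomp {T₂ : Y →ₗ.[ℂ] Z} {T₁ : X →ₗ.[ℂ] Y} {x : X} {z : Z} :
    (x, z) ∈ (pcomp T₂ T₁).graph ↔ ∃ y, (x, y) ∈ T₁.graph ∧ (y, z) ∈ T₂.graph := by
  simp only [LinearPMap.mem_graph_iff]
  constructor
  · rintro ⟨⟨_, x, hx, rfl⟩, rfl, rfl⟩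
    exact ⟨T₁ x, ⟨x, rfl, rfl⟩, ⟨T₁ x, hx⟩, rfl, (pcomp_apply hx _).symm⟩
  · rintro ⟨_, ⟨x, rfl, rfl⟩, y, hy, rfl⟩
    have hx : T₁ x ∈ T₂.domain := hy ▸ y.2
    exact ⟨⟨x, x, hx, rfl⟩, rfl, (pcomp_apply hx _).trans (congrArg T₂ (Subtype.ext hy.symm))⟩

theorem range_pcomp (T₂ : Y →ₗ.[ℂ] Z) (T₁ : X →ₗ.[ℂ] Y) :
    LinearMap.range (pcomp T₂ T₁).toFun =
      ((LinearMap.range T₁.toFun).comap T₂.domain.subtype).map T₂.toFun := by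
  ext z
  constructor
  · rintro ⟨⟨_, x, hx, rfl⟩, rfl⟩
    exact ⟨⟨T₁ x, hx⟩, ⟨x, rfl⟩, (pcomp_apply hx _).symm⟩
  · rintro ⟨⟨_, hx⟩, ⟨x, rfl⟩, rfl⟩
    exact ⟨⟨x, x, hx, rfl⟩, pcomp_apply hx _⟩

end Composition

section ZeroRegular

open Filter Topology

variable {X Y Z : Type*}
  [NormedAddCommGroup X] [InnerProductSpace ℂ X] [NormedAddCommGroup Y] [InnerProductSpace ℂ Y]
  [NormedAddCommGroup Z] [InnerProductSpace ℂ Z]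
  {T : X →ₗ.[ℂ] Y} {T₁ : X →ₗ.[ℂ] Y} {T₂ : Y →ₗ.[ℂ] Z}

theorem ZeroRegular.injective (hT : ZeroRegular T) : Function.Injective T := by
  obtain ⟨c, hc, h⟩ := hT
  refine (injective_iff_map_eq_zero T.toFun).2 fun f hf => Subtype.ext <| norm_le_zero_iff.1 ?_
  have hTf : c * ‖(f : X)‖ ≤ 0 := by simpa only [← LinearPMap.toFun_eq_coe, hf, norm_zero] using h f
  exact nonpos_of_mul_nonpos_right hTf hc

theorem ZeroRegular.pcomp (h₂ : ZeroRegular T₂) (h₁ : ZeroRegular T₁) :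
    ZeroRegular (pcomp T₂ T₁) := by
  obtain ⟨c₁, hc₁, h₁⟩ := h₁
  obtain ⟨c₂, hc₂, h₂⟩ := h₂
  refine ⟨c₂ * c₁, mul_pos hc₂ hc₁, ?_⟩
  rintro ⟨_, x, hx, rfl⟩
  calc c₂ * c₁ * ‖(x : X)‖ = c₂ * (c₁ * ‖(x : X)‖) := mul_assoc ..
    _ ≤ c₂ * ‖T₁ x‖ := by gcongr; exact h₁ x
    _ ≤ ‖T₂ ⟨T₁ x, hx⟩‖ := h₂ ⟨T₁ x, hx⟩
    _ = ‖_root_.pcomp T₂ T₁ _‖ := congrArg norm (pcomp_apply hx _).symm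

theorem ZeroRegular.exists_antilipschitz (hT : ZeroRegular T) :
    ∃ K, AntilipschitzWith K T := by
  obtain ⟨c, hc, h⟩ := hT
  refine ⟨(Real.toNNReal c)⁻¹, AddMonoidHomClass.antilipschitz_of_bound T.toFun fun f => ?_⟩
  rw [NNReal.coe_inv, Real.coe_toNNReal c hc.le, le_inv_mul_iff₀ hc]
  exact h f

theorem ZeroRegular.tendsto_of_tendsto_apply (hT : ZeroRegular T) {f : ℕ → T.domain}
    {g : T.domain} (h : Tendsto (fun n => T (f n)) atTop (𝓝 (T g))) :
    Tendsto (fun n => (f n : X)) atTop (𝓝 g) := by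
  obtain ⟨K, hK⟩ := hT.exists_antilipschitz
  exact (continuous_subtype_val.tendsto g).comp <|
    (tendsto_comap_iff.2 h).mono_right (hK.comap_nhds_le g)

theorem ZeroRegular.cauchySeq_of_cauchySeq_apply (hT : ZeroRegular T) {f : ℕ → T.domain}
    (h : CauchySeq fun n => T (f n)) : CauchySeq fun n => (f n : X) := by
  obtain ⟨K, hK⟩ := hT.exists_antilipschitz
  have hTf : Tendsto (Prod.map T T ∘ Prod.map f f) atTop (uniformity Y) :=
    cauchySeq_iff_tendsto.1 h
  have hf : CauchySeq f := cauchySeq_iff_tendsto.2 <|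
    (tendsto_comap_iff.2 hTf).mono_right hK.comap_uniformity_le
  exact uniformContinuous_subtype_val.comp_cauchySeq hf

theorem ZeroRegular.isClosed_map [CompleteSpace X] (hT : ZeroRegular T) (hcl : T.IsClosed)
    {K : Submodule ℂ X} (hK : IsClosed (K : Set X)) :
    IsClosed (((K.comap T.domain.subtype).map T.toFun : Submodule ℂ Y) : Set Y) := by
  refine IsSeqClosed.isClosed fun y y₀ hy hlim => ?_
  choose f hfK hfy using hy
  have hTf : CauchySeq fun n => T (f n) := by
    simpa only [← LinearPMap.toFun_eq_coe, hfy] using hlim.cauchySeq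
  obtain ⟨x₀, hx₀⟩ := cauchySeq_tendsto_of_complete (hT.cauchySeq_of_cauchySeq_apply hTf)
  have hgraph : (x₀, y₀) ∈ T.graph :=
    hcl.mem_of_tendsto (hx₀.prodMk_nhds hlim) <| .of_forall fun n => hfy n ▸ T.mem_graph (f n)
  obtain ⟨g, rfl, rfl⟩ := T.mem_graph_iff.1 hgraph
  exact ⟨g, hK.mem_of_tendsto hx₀ (.of_forall hfK), rfl⟩

theorem ZeroRegular.isClosed_range [CompleteSpace X] (hT : ZeroRegular T) (hcl : T.IsClosed) :
    IsClosed (LinearMap.range T.toFun : Set Y) := by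
  have h := hT.isClosed_map hcl (K := ⊤) isClosed_univ
  rwa [Submodule.comap_top, Submodule.map_top] at h

theorem ZeroRegular.isClosed_range_pcomp [CompleteSpace Y] (h₂ : ZeroRegular T₂)
    (hcl₂ : T₂.IsClosed) (hran₁ : IsClosed (LinearMap.range T₁.toFun : Set Y)) :
    IsClosed (LinearMap.range (_root_.pcomp T₂ T₁).toFun : Set Z) := by
  rw [range_pcomp]
  exact h₂.isClosed_map hcl₂ hran₁

theorem ZeroRegular.isClosed_of_isClosed_range (hT : ZeroRegular T)
    (hran : IsClosed (LinearMap.range T.toFun : Set Y)) : T.IsClosed := by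
  refine IsSeqClosed.isClosed fun p p₀ hp hlim => ?_
  choose f hf hfp using fun n => (T.mem_graph_iff).1 (hp n)
  have hTf : Tendsto (fun n => T (f n)) atTop (𝓝 p₀.2) := by
    simpa only [hfp] using hlim.snd_nhds
  obtain ⟨g, hg⟩ := hran.mem_of_tendsto hTf (.of_forall fun n => ⟨f n, rfl⟩)
  have hgp : (g : X) = p₀.1 := tendsto_nhds_unique
    (hT.tendsto_of_tendsto_apply (hg ▸ hTf)) (by simpa only [hf] using hlim.fst_nhds)
  exact T.mem_graph_iff.2 ⟨g, hgp, hg⟩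

theorem ZeroRegular.dense_domain_pcomp (h₁ : ZeroRegular T₁)
    (hdom₁ : Dense (T₁.domain : Set X)) (hdom₂ : Dense (T₂.domain : Set Y))
    (hran₁ : IsClosed (LinearMap.range T₁.toFun : Set Y))
    (hfin : FiniteDimensional ℂ (Y ⧸ LinearMap.range T₁.toFun)) :
    Dense ((_root_.pcomp T₂ T₁).domain : Set X) := by
  refine dense_closure.1 (hdom₁.mono fun x hx => ?_)
  obtain ⟨y, hy, hlim⟩ := mem_closure_iff_seq_limit.1 <|
    subset_closure_inf_of_dense hdom₂ hran₁ ⟨⟨x, hx⟩, rfl⟩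
  choose f hf using fun n => (hy n).2
  refine mem_closure_of_tendsto (h₁.tendsto_of_tendsto_apply (f := f) (g := ⟨x, hx⟩) ?_) <|
    .of_forall fun n => ⟨f n, Submodule.mem_comap.2 (hf n ▸ (hy n).1), rfl⟩
  simpa only [← LinearPMap.toFun_eq_coe, hf] using hlim

end ZeroRegular

section Codimension

variable {X : Type*} {Y Z : Type u}
  [NormedAddCommGroup X] [InnerProductSpace ℂ X] [NormedAddCommGroup Y] [InnerProductSpace ℂ Y]
  [NormedAddCommGroup Z] [InnerProductSpace ℂ Z]
  {T₁ : X →ₗ.[ℂ] Y} {T₂ : Y →ₗ.[ℂ] Z}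

theorem rank_quotient_range_pcomp_eq (h₂ : Function.Injective T₂) :
    Module.rank ℂ (Z ⧸ LinearMap.range (pcomp T₂ T₁).toFun) =
      Module.rank ℂ (Z ⧸ LinearMap.range T₂.toFun) +
        Module.rank ℂ (T₂.domain ⧸ (LinearMap.range T₁.toFun).comap T₂.domain.subtype) := by
  rw [range_pcomp]
  exact rank_quotient_map_of_injective (B := T₂.toFun) h₂ _

theorem rank_quotient_range_pcomp_le (h₂ : Function.Injective T₂) :
    Module.rank ℂ (Z ⧸ LinearMap.range (pcomp T₂ T₁).toFun) ≤
      Module.rank ℂ (Z ⧸ LinearMap.range T₂.toFun) +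
        Module.rank ℂ (Y ⧸ LinearMap.range T₁.toFun) :=
  (rank_quotient_range_pcomp_eq h₂).trans_le <|
    add_le_add_right (rank_quotient_comap_subtype_le _ _) _

theorem rank_quotient_range_pcomp (h₂ : Function.Injective T₂)
    (hdom₂ : Dense (T₂.domain : Set Y)) (hran₁ : IsClosed (LinearMap.range T₁.toFun : Set Y))
    (hfin : FiniteDimensional ℂ (Y ⧸ LinearMap.range T₁.toFun)) :
    Module.rank ℂ (Z ⧸ LinearMap.range (pcomp T₂ T₁).toFun) =
      Module.rank ℂ (Z ⧸ LinearMap.range T₂.toFun) +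
        Module.rank ℂ (Y ⧸ LinearMap.range T₁.toFun) := by
  rw [rank_quotient_range_pcomp_eq h₂,
    rank_quotient_comap_subtype (codisjoint_of_dense_of_isClosed hdom₂ hran₁).symm]

theorem rank_quotient_range_pcomp_of_comm {T₁ T₂ : Y →ₗ.[ℂ] Y} (h₁ : Function.Injective T₁)
    (h₂ : Function.Injective T₂) (hcomm : pcomp T₂ T₁ = pcomp T₁ T₂)
    (hdom₂ : Dense (T₂.domain : Set Y)) (hran₁ : IsClosed (LinearMap.range T₁.toFun : Set Y)) :
    Module.rank ℂ (Y ⧸ LinearMap.range (pcomp T₂ T₁).toFun) =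
      Module.rank ℂ (Y ⧸ LinearMap.range T₂.toFun) +
        Module.rank ℂ (Y ⧸ LinearMap.range T₁.toFun) := by
  rcases lt_or_ge (Module.rank ℂ (Y ⧸ LinearMap.range T₁.toFun)) ℵ₀ with hfin | hinf
  · exact rank_quotient_range_pcomp h₂ hdom₂ hran₁ (Module.rank_lt_aleph0_iff.1 hfin)
  · have hle₁ : Module.rank ℂ (Y ⧸ LinearMap.range T₁.toFun) ≤
        Module.rank ℂ (Y ⧸ LinearMap.range (pcomp T₂ T₁).toFun) := by
      rw [hcomm, rank_quotient_range_pcomp_eq h₁]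
      exact self_le_add_right _ _
    have hle₂ : Module.rank ℂ (Y ⧸ LinearMap.range T₂.toFun) ≤
        Module.rank ℂ (Y ⧸ LinearMap.range (pcomp T₂ T₁).toFun) := by
      rw [rank_quotient_range_pcomp_eq h₂]
      exact self_le_add_right _ _
    exact (rank_quotient_range_pcomp_le h₂).antisymm
      (Cardinal.add_le_of_le (hinf.trans hle₁) hle₂ hle₁)

end Codimension

section Defect

variable {X : Type*} [NormedAddCommGroup X] [InnerProductSpace ℂ X] {S : X →ₗ.[ℂ] X} {z w : ℂ}

/-- The operator `S - z·I` on `dom S`. -/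
def shift (S : X →ₗ.[ℂ] X) (z : ℂ) : X →ₗ.[ℂ] X :=
  ⟨S.domain, S.toFun - z • S.domain.subtype⟩

/-- The defect number of `S` at `z`, encoded as the codimension of the range of `S - z·I`: this
needs no adjoint, and it is `dim ker(S* - conj z)` when `S` is densely defined and the range is
closed. -/
def defectAt (S : X →ₗ.[ℂ] X) (z : ℂ) : Cardinal :=
  Module.rank ℂ (X ⧸ LinearMap.range (shift S z).toFun)

theorem mem_range_shift {y : X} :
    y ∈ LinearMap.range (shift S z).toFun ↔ ∃ f : S.domain, S f - z • (f : X) = y :=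
  Iff.rfl

theorem mem_graph_shift {x y : X} : (x, y) ∈ (shift S z).graph ↔ (x, y + z • x) ∈ S.graph := by
  simp only [LinearPMap.mem_graph_iff]
  constructor <;> rintro ⟨f, rfl, h⟩
  · exact ⟨f, rfl, sub_eq_iff_eq_add.1 h⟩
  · exact ⟨f, rfl, sub_eq_iff_eq_add.2 h⟩

theorem isClosed_shift_iff : (shift S z).IsClosed ↔ S.IsClosed := by
  have hshift : ((shift S z).graph : Set (X × X)) =
      (fun p => (p.1, p.2 + z • p.1)) ⁻¹' S.graph := Set.ext fun _ => mem_graph_shift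
  have hunshift : (S.graph : Set (X × X)) =
      (fun p => (p.1, p.2 - z • p.1)) ⁻¹' (shift S z).graph := Set.ext fun p => by
    rw [Set.mem_preimage, SetLike.mem_coe, SetLike.mem_coe, mem_graph_shift, sub_add_cancel]
  constructor <;> intro h
  · rw [LinearPMap.IsClosed, hunshift]
    exact h.preimage (by fun_prop)
  · rw [LinearPMap.IsClosed, hshift]
    exact h.preimage (by fun_prop)

theorem IsSymmP.im_inner_apply_self (hS : IsSymmP S) (f : S.domain) : (⟪(f : X), S f⟫_ℂ).im = 0 :=
  Complex.conj_eq_iff_im.1 <| (inner_conj_symm _ _).trans (hS f f)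

theorem IsSymmP.abs_im_mul_norm_le (hS : IsSymmP S) (z : ℂ) (f : S.domain) :
    |z.im| * ‖(f : X)‖ ≤ ‖S f - z • (f : X)‖ := by
  have him : (⟪(f : X), S f - z • (f : X)⟫_ℂ).im = -(z.im * ‖(f : X)‖ ^ 2) := by
    rw [inner_sub_right, inner_smul_right, inner_self_eq_norm_sq_to_K, Complex.sub_im,
      hS.im_inner_apply_self, zero_sub, RCLike.ofReal_eq_complex_ofReal, ← Complex.ofReal_pow,
      Complex.im_mul_ofReal]
  have hle : ‖(f : X)‖ * (|z.im| * ‖(f : X)‖) ≤ ‖(f : X)‖ * ‖S f - z • (f : X)‖ :=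
    calc ‖(f : X)‖ * (|z.im| * ‖(f : X)‖) = |(⟪(f : X), S f - z • (f : X)⟫_ℂ).im| := by
          rw [him, abs_neg, abs_mul, abs_sq]; ring
      _ ≤ ‖⟪(f : X), S f - z • (f : X)⟫_ℂ‖ := Complex.abs_im_le_norm _
      _ ≤ ‖(f : X)‖ * ‖S f - z • (f : X)‖ := norm_inner_le_norm _ _
  rcases (norm_nonneg (f : X)).eq_or_lt with hf | hf
  · rw [← hf, mul_zero]
    exact norm_nonneg _
  · exact le_of_mul_le_mul_left hle hf

theorem IsSymmP.zeroRegular_shift (hS : IsSymmP S) (hz : z.im ≠ 0) : ZeroRegular (shift S z) :=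
  ⟨|z.im|, abs_pos.2 hz, hS.abs_im_mul_norm_le z⟩

theorem disjoint_orthogonal_range_shift {c : ℝ}
    (hc : ∀ f : S.domain, c * ‖(f : X)‖ ≤ ‖S f - z • (f : X)‖) (hzw : ‖z - w‖ < c) :
    Disjoint (LinearMap.range (shift S w).toFun)ᗮ (LinearMap.range (shift S z).toFun) := by
  rw [Submodule.disjoint_def]
  intro x hx hxz
  obtain ⟨f, rfl⟩ := mem_range_shift.1 hxz
  have horth : ⟪S f - w • (f : X), S f - z • (f : X)⟫_ℂ = 0 := hx _ ⟨f, rfl⟩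
  have hle : ‖S f - z • (f : X)‖ ≤ ‖z - w‖ * ‖(f : X)‖ := by
    have hpyth := norm_add_sq_eq_norm_sq_add_norm_sq_of_inner_eq_zero (𝕜 := ℂ) (S f - w • (f : X))
      (-(S f - z • (f : X))) (by rw [inner_neg_right, horth, neg_zero])
    rw [show S f - w • (f : X) + -(S f - z • (f : X)) = (z - w) • (f : X) by module, norm_neg]
      at hpyth
    rw [← norm_smul, mul_self_le_mul_self_iff (norm_nonneg _) (norm_nonneg _), hpyth]
    exact le_add_of_nonneg_left (mul_self_nonneg _)
  have hf : ‖(f : X)‖ = 0 := by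
    by_contra hne
    nlinarith [hc f, (norm_nonneg (f : X)).lt_of_ne' hne]
  rwa [hf, mul_zero, norm_le_zero_iff] at hle

theorem mem_map_subtype_kerAt {A : X →ₗ.[ℂ] X} {μ : ℂ} {y : X} :
    y ∈ (kerAt A μ).map A.domain.subtype ↔ (y, μ • y) ∈ A.graph := by
  rw [LinearPMap.mem_graph_iff]
  constructor
  · rintro ⟨f, hf, rfl⟩
    exact ⟨f, rfl, sub_eq_zero.1 hf⟩
  · rintro ⟨f, rfl, hf⟩
    exact ⟨f, sub_eq_zero.2 hf, rfl⟩

section CompleteSpace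

variable [CompleteSpace X]

theorem IsSymmP.isClosed_range_shift (hS : IsSymmP S) (hcl : S.IsClosed) (hz : z.im ≠ 0) :
    IsClosed (LinearMap.range (shift S z).toFun : Set X) :=
  (hS.zeroRegular_shift hz).isClosed_range (isClosed_shift_iff.2 hcl)

theorem defectAt_eq_rank_orthogonal (h : IsClosed (LinearMap.range (shift S z).toFun : Set X)) :
    defectAt S z = Module.rank ℂ (LinearMap.range (shift S z).toFun)ᗮ := by
  have : CompleteSpace (LinearMap.range (shift S z).toFun) := h.completeSpace_coe
  exact (Submodule.quotientEquivOfIsCompl _ _ (Submodule.isCompl_orthogonal _)).rank_eq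

theorem mem_orthogonal_range_shift_iff (hdom : Dense (S.domain : Set X)) {y : X} :
    y ∈ (LinearMap.range (shift S z).toFun)ᗮ ↔
      (y, starRingEnd ℂ z • y) ∈ S.adjoint.graph := by
  have hiff : y ∈ (LinearMap.range (shift S z).toFun)ᗮ ↔
      ∀ f : S.domain, ⟪starRingEnd ℂ z • y, (f : X)⟫_ℂ = ⟪y, S f⟫_ℂ := by
    simp only [Submodule.mem_orthogonal', mem_range_shift, forall_exists_index,
      forall_apply_eq_imp_iff]
    refine forall_congr' fun f => ?_
    rw [inner_sub_right, inner_smul_right, inner_smul_left,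
      Complex.conj_conj, sub_eq_zero, eq_comm]
  rw [hiff, LinearPMap.mem_graph_iff]
  constructor
  · intro h
    have hy : y ∈ S.adjoint.domain := LinearPMap.mem_adjoint_domain_of_exists y ⟨_, h⟩
    exact ⟨⟨y, hy⟩, rfl, LinearPMap.adjoint_apply_eq hdom ⟨y, hy⟩ h⟩
  · rintro ⟨y, rfl, hy⟩ f
    exact (congrArg (⟪·, (f : X)⟫_ℂ) hy).symm.trans (LinearPMap.adjoint_isFormalAdjoint hdom y f)

theorem rank_kerAt_adjoint (hdom : Dense (S.domain : Set X))
    (hran : IsClosed (LinearMap.range (shift S z).toFun : Set X)) :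
    Module.rank ℂ (kerAt S.adjoint (starRingEnd ℂ z)) = defectAt S z := by
  have hmap : (kerAt S.adjoint (starRingEnd ℂ z)).map S.adjoint.domain.subtype =
      (LinearMap.range (shift S z).toFun)ᗮ := Submodule.ext fun _ =>
    mem_map_subtype_kerAt.trans (mem_orthogonal_range_shift_iff hdom).symm
  rw [defectAt_eq_rank_orthogonal hran, ← hmap]
  exact (Submodule.equivMapOfInjective _ (Submodule.injective_subtype _) _).rank_eq

theorem IsSymmP.defectAt_le_of_norm_sub_lt (hS : IsSymmP S) (hcl : S.IsClosed) (hw : w.im ≠ 0)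
    (hzw : ‖z - w‖ < |z.im|) : defectAt S w ≤ defectAt S z := by
  rw [defectAt_eq_rank_orthogonal (hS.isClosed_range_shift hcl hw)]
  exact rank_le_rank_quotient_of_disjoint <|
    disjoint_orthogonal_range_shift (hS.abs_im_mul_norm_le z) hzw

theorem IsSymmP.defectAt_eq_of_norm_sub_lt (hS : IsSymmP S) (hcl : S.IsClosed)
    (hzw : ‖z - w‖ < |z.im| / 2) : defectAt S w = defectAt S z := by
  have him : |z.im| - |w.im| ≤ ‖z - w‖ :=
    (abs_sub_abs_le_abs_sub _ _).trans (Complex.sub_im z w ▸ Complex.abs_im_le_norm _)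
  have hw : 0 < |w.im| := by linarith [norm_nonneg (z - w)]
  have hz : 0 < |z.im| := by linarith [norm_nonneg (z - w)]
  refine (hS.defectAt_le_of_norm_sub_lt hcl (abs_pos.1 hw) (by linarith)).antisymm
    (hS.defectAt_le_of_norm_sub_lt hcl (abs_pos.1 hz) ?_)
  rw [norm_sub_rev]
  linarith

theorem IsSymmP.defectAt_eq_of_im_mul_pos (hS : IsSymmP S) (hcl : S.IsClosed)
    (hzw : 0 < z.im * w.im) : defectAt S w = defectAt S z := by
  have hhalf : IsPreconnected {u : ℂ | 0 < z.im * u.im} :=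
    (convex_halfSpace_gt (z.im • Complex.imLm).isLinear 0).isPreconnected
  refine hhalf.induction₂ (fun u v => defectAt S v = defectAt S u) (fun u hu => ?_)
    (fun _ _ _ _ _ _ h₁ h₂ => h₂.trans h₁) (fun _ _ _ _ h => h.symm) ?_ hzw
  · have hu : 0 < |u.im| / 2 := half_pos <| abs_pos.2 <| right_ne_zero_of_mul hu.ne'
    filter_upwards [mem_nhdsWithin_of_mem_nhds (Metric.ball_mem_nhds u hu)] with v hv
    exact hS.defectAt_eq_of_norm_sub_lt hcl (mem_ball_iff_norm'.1 hv)
  · exact mul_self_pos.2 (left_ne_zero_of_mul hzw.ne')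

end CompleteSpace

end Defect

section Polynomial

open Polynomial

variable {V : Type*} [NormedAddCommGroup V] [InnerProductSpace ℂ V] {S : V →ₗ.[ℂ] V} {p q : ℂ[X]}

/-- An everywhere defined linear extension of `S`. It makes the polynomial functional calculus
`Polynomial.aeval` available; only its values on `dom S` matter below. -/
def extension (S : V →ₗ.[ℂ] V) : V →ₗ[ℂ] V :=
  S.toFun.exists_extend.choose

/-- The domain of the `n`-th power of `S`, all `f` with `f, S f, …, S^(n-1) f ∈ dom S`. -/
def powDomain (S : V →ₗ.[ℂ] V) (n : ℕ) : Submodule ℂ V :=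
  ⨅ j < n, S.domain.comap (extension S ^ j)

/-- The polynomial `p(S)` of a partially defined operator, on the domain of `S^(deg p)`. -/
def paeval (S : V →ₗ.[ℂ] V) (p : ℂ[X]) : V →ₗ.[ℂ] V :=
  (aeval (extension S) p).toPMap (powDomain S p.natDegree)

theorem extension_apply (S : V →ₗ.[ℂ] V) (f : S.domain) : extension S f = S f :=
  LinearMap.congr_fun S.toFun.exists_extend.choose_spec f

theorem mem_powDomain {n : ℕ} {f : V} :
    f ∈ powDomain S n ↔ ∀ j < n, (extension S ^ j) f ∈ S.domain := by
  simp only [powDomain, Submodule.mem_iInf, Submodule.mem_comap]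

theorem powDomain_zero (S : V →ₗ.[ℂ] V) : powDomain S 0 = ⊤ := by
  simp [powDomain]

theorem mem_powDomain_succ {n : ℕ} {f : V} :
    f ∈ powDomain S (n + 1) ↔ f ∈ powDomain S n ∧ (extension S ^ n) f ∈ S.domain := by
  simp only [mem_powDomain, Nat.forall_lt_succ_right]

theorem mem_graph_paeval {x y : V} :
    (x, y) ∈ (paeval S p).graph ↔
      x ∈ powDomain S p.natDegree ∧ aeval (extension S) p x = y := by
  rw [LinearPMap.mem_graph_iff]
  constructor
  · rintro ⟨f, rfl, rfl⟩
    exact ⟨f.2, rfl⟩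
  · rintro ⟨hx, rfl⟩
    exact ⟨⟨x, hx⟩, rfl, rfl⟩

theorem aeval_extension_mem_domain_iff (hp : p ≠ 0) {f : V} (hf : f ∈ powDomain S p.natDegree) :
    aeval (extension S) p f ∈ S.domain ↔ (extension S ^ p.natDegree) f ∈ S.domain := by
  have hlower : ∑ j ∈ Finset.range p.natDegree, (p.coeff j • extension S ^ j) f ∈ S.domain :=
    sum_mem fun j hj => S.domain.smul_mem _ (mem_powDomain.1 hf j (Finset.mem_range.1 hj))
  rw [aeval_eq_sum_range, LinearMap.sum_apply, Finset.sum_range_succ,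
    S.domain.add_mem_iff_right hlower]
  exact S.domain.smul_mem_iff (leadingCoeff_ne_zero.2 hp)

theorem mem_powDomain_natDegree_add (hp : p ≠ 0) {f : V} (n : ℕ) :
    f ∈ powDomain S (p.natDegree + n) ↔
      f ∈ powDomain S p.natDegree ∧ aeval (extension S) p f ∈ powDomain S n := by
  induction n with
  | zero => simp [powDomain_zero]
  | succ n ih =>
    have hpow : (X ^ n * p).natDegree = p.natDegree + n := by
      rw [natDegree_X_pow_mul n hp]
    rw [← add_assoc, mem_powDomain_succ, mem_powDomain_succ, ← and_assoc, ← ih]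
    refine and_congr_right fun hf => ?_
    have hXp : X ^ n * p ≠ 0 := mul_ne_zero (pow_ne_zero n X_ne_zero) hp
    rw [← hpow, ← aeval_extension_mem_domain_iff hXp (hpow.symm ▸ hf), map_mul, aeval_X_pow,
      Module.End.mul_apply]

theorem pcomp_paeval (hq : q ≠ 0) (hp : p ≠ 0) :
    pcomp (paeval S q) (paeval S p) = paeval S (q * p) := by
  refine LinearPMap.eq_of_eq_graph <| Submodule.ext fun ⟨x, z⟩ => ?_
  simp only [mem_graph_pcomp, mem_graph_paeval, natDegree_mul hq hp, map_mul,
    Module.End.mul_apply, add_comm q.natDegree, mem_powDomain_natDegree_add hp]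
  simp only [and_assoc, exists_and_left, exists_eq_left']

theorem paeval_X (S : V →ₗ.[ℂ] V) : paeval S X = S := by
  refine LinearPMap.eq_of_eq_graph <| Submodule.ext fun ⟨x, y⟩ => ?_
  rw [mem_graph_paeval, natDegree_X, aeval_X, mem_powDomain_succ, powDomain_zero,
    LinearPMap.mem_graph_iff]
  constructor
  · rintro ⟨⟨-, hx⟩, rfl⟩
    exact ⟨⟨x, hx⟩, rfl, (extension_apply S ⟨x, hx⟩).symm⟩
  · rintro ⟨f, rfl, rfl⟩
    exact ⟨⟨trivial, f.2⟩, extension_apply S f⟩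

theorem paeval_one (S : V →ₗ.[ℂ] V) : paeval S 1 = pid V := by
  rw [paeval, natDegree_one, powDomain_zero, map_one]
  rfl

theorem shift_paeval (S : V →ₗ.[ℂ] V) (p : ℂ[X]) (w : ℂ) :
    shift (paeval S p) w = paeval S (p - C w) := by
  refine LinearPMap.eq_of_eq_graph <| Submodule.ext fun ⟨x, y⟩ => ?_
  rw [mem_graph_shift, mem_graph_paeval, mem_graph_paeval, natDegree_sub_C, map_sub, aeval_C,
    LinearMap.sub_apply, Module.algebraMap_end_apply, sub_eq_iff_eq_add]

theorem paeval_X_sub_C (S : V →ₗ.[ℂ] V) (z : ℂ) : paeval S (X - C z) = shift S z := by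
  rw [← shift_paeval, paeval_X]

theorem pcomp_paeval_X_pow (S : V →ₗ.[ℂ] V) (n : ℕ) :
    pcomp S (paeval S (X ^ n)) = paeval S (X ^ (n + 1)) := by
  rw [pow_succ', ← pcomp_paeval X_ne_zero (pow_ne_zero n X_ne_zero), paeval_X]

theorem paeval_X_pow_pcomp (S : V →ₗ.[ℂ] V) (n : ℕ) :
    pcomp (paeval S (X ^ n)) S = paeval S (X ^ (n + 1)) := by
  rw [pow_succ, ← pcomp_paeval (pow_ne_zero n X_ne_zero) X_ne_zero, paeval_X]

theorem pmapPow_eq_paeval (S : V →ₗ.[ℂ] V) (n : ℕ) : pmapPow S n = paeval S (X ^ n) := by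
  induction n with
  | zero => rw [pow_zero, paeval_one, pmapPow]
  | succ n ih =>
    cases n with
    | zero => rw [pow_one, paeval_X, pmapPow]
    | succ n => rw [pmapPow, ih, pcomp_paeval_X_pow]

theorem IsSymmP.inner_graph (hS : IsSymmP S) {x y x' y' : V} (h : (x, y) ∈ S.graph)
    (h' : (x', y') ∈ S.graph) : ⟪y, x'⟫_ℂ = ⟪x, y'⟫_ℂ := by
  obtain ⟨f, rfl, rfl⟩ := S.mem_graph_iff.1 h
  obtain ⟨g, rfl, rfl⟩ := S.mem_graph_iff.1 h'
  exact hS f g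

theorem IsSymmP.pcomp_of_comm {T : V →ₗ.[ℂ] V} (hS : IsSymmP S) (hT : IsSymmP T)
    (hcomm : pcomp S T = pcomp T S) : IsSymmP (pcomp S T) := by
  intro f g
  obtain ⟨y, hf, hy⟩ := mem_graph_pcomp.1 ((pcomp S T).mem_graph f)
  have hgraph : ((g : V), pcomp S T g) ∈ (pcomp T S).graph := by
    rw [← hcomm]
    exact (pcomp S T).mem_graph g
  obtain ⟨y', hg, hy'⟩ := mem_graph_pcomp.1 hgraph
  exact (hS.inner_graph hy hg).trans (hT.inner_graph hf hy')

theorem IsSymmP.pmapPow (hS : IsSymmP S) (n : ℕ) : IsSymmP (pmapPow S n) := by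
  rw [pmapPow_eq_paeval]
  induction n with
  | zero =>
    rw [pow_zero, paeval_one]
    exact fun f g => rfl
  | succ n ih =>
    rw [← pcomp_paeval_X_pow]
    exact hS.pcomp_of_comm ih ((pcomp_paeval_X_pow S n).trans (paeval_X_pow_pcomp S n).symm)

/-- The product of the operators `S - z·I` over `z ∈ s`, with domain `dom S^(card s)`. -/
def shiftProd (S : V →ₗ.[ℂ] V) (s : Multiset ℂ) : V →ₗ.[ℂ] V :=
  paeval S (s.map fun z => X - C z).prod

theorem shiftProd_zero (S : V →ₗ.[ℂ] V) : shiftProd S 0 = pid V := by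
  rw [shiftProd, Multiset.map_zero, Multiset.prod_zero, paeval_one]

theorem shiftProd_singleton (S : V →ₗ.[ℂ] V) (z : ℂ) : shiftProd S {z} = shift S z := by
  rw [shiftProd, Multiset.map_singleton, Multiset.prod_singleton, paeval_X_sub_C]

theorem shiftProd_add (S : V →ₗ.[ℂ] V) (s t : Multiset ℂ) :
    shiftProd S (s + t) = pcomp (shiftProd S s) (shiftProd S t) := by
  have hne (r : Multiset ℂ) : (r.map fun z => X - C z).prod ≠ 0 :=
    (monic_multiset_prod_of_monic _ _ fun z _ => monic_X_sub_C z).ne_zero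
  rw [shiftProd, shiftProd, shiftProd, Multiset.map_add, Multiset.prod_add,
    pcomp_paeval (hne s) (hne t)]

theorem shiftProd_cons (S : V →ₗ.[ℂ] V) (z : ℂ) (s : Multiset ℂ) :
    shiftProd S (z ::ₘ s) = pcomp (shift S z) (shiftProd S s) := by
  rw [← Multiset.singleton_add, shiftProd_add, shiftProd_singleton]

theorem pcomp_shift_shiftProd_comm (S : V →ₗ.[ℂ] V) (z : ℂ) (s : Multiset ℂ) :
    pcomp (shift S z) (shiftProd S s) = pcomp (shiftProd S s) (shift S z) := by
  rw [← shiftProd_singleton, ← shiftProd_add, ← shiftProd_add, add_comm]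

theorem shiftProd_nthRoots (S : V →ₗ.[ℂ] V) {n : ℕ} (hn : n ≠ 0) (w : ℂ) :
    shiftProd S (nthRoots n w) = shift (pmapPow S n) w := by
  rw [shiftProd, pmapPow_eq_paeval, shift_paeval, nthRoots,
    ← (IsAlgClosed.splits _).eq_prod_roots_of_monic (monic_X_pow_sub_C w hn)]

end Polynomial

section NthRoots

open Polynomial Complex
open scoped Real

theorem nthRoots_eq_map_exp {n : ℕ} (hn : n ≠ 0) {w : ℂ} (hw : w ≠ 0) :
    nthRoots n w = (Multiset.range n).map fun j : ℕ => exp ((log w + 2 * π * j * I) / n) := by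
  have hn' : (n : ℂ) ≠ 0 := Nat.cast_ne_zero.2 hn
  have hroot : exp (log w / n) ^ n = w := by
    rw [← exp_nat_mul, mul_div_cancel₀ _ hn', exp_log hw]
  rw [(isPrimitiveRoot_exp n hn).nthRoots_eq hroot]
  refine Multiset.map_congr rfl fun j _ => ?_
  rw [← exp_nat_mul, ← exp_add]
  ring_nf

theorem im_exp_log_add_div (w : ℂ) (n j : ℕ) :
    (exp ((log w + 2 * π * j * I) / n)).im =
      Real.exp (((log w + 2 * π * j * I) / n).re) * Real.sin ((arg w + 2 * π * j) / n) := by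
  have him : ((log w + 2 * π * j * I) / n).im = (arg w + 2 * π * j) / n := by
    simp [div_natCast_im, log_im]
  rw [exp_im, him]

theorem nthRoots_conj (n : ℕ) (w : ℂ) :
    nthRoots n (starRingEnd ℂ w) = (nthRoots n w).map (starRingEnd ℂ) := by
  have hmap : (X ^ n - C w).map (starRingEnd ℂ) = X ^ n - C (starRingEnd ℂ w) := by
    rw [Polynomial.map_sub, Polynomial.map_pow, map_X, map_C]
  rw [nthRoots, nthRoots, ← hmap, (IsAlgClosed.splits _).roots_map]

theorem im_ne_zero_of_mem_nthRoots {n : ℕ} {w z : ℂ} (hn : n ≠ 0) (hw : w.im ≠ 0)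
    (hz : z ∈ nthRoots n w) : z.im ≠ 0 := by
  rw [mem_nthRoots (Nat.pos_of_ne_zero hn)] at hz
  intro him
  have hconj : starRingEnd ℂ w = w := by rw [← hz, map_pow, conj_eq_iff_im.2 him]
  exact hw (conj_eq_iff_im.1 hconj)

theorem exists_nthRoots_odd_eq_add_of_im_pos {w : ℂ} (hw : 0 < w.im) (k : ℕ) :
    ∃ u v : Multiset ℂ, nthRoots (2 * k + 1) w = u + v ∧ u.card = k + 1 ∧ v.card = k ∧
      (∀ z ∈ u, 0 < z.im) ∧ ∀ z ∈ v, z.im < 0 := by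
  have hw0 : w ≠ 0 := fun h => hw.ne' (by rw [h, zero_im])
  have harg : 0 < arg w :=
    (arg_nonneg_iff.2 hw.le).lt_of_ne' fun h => hw.ne' (arg_eq_zero_iff.1 h).2
  have hargπ : arg w < π := arg_lt_pi_iff.2 (.inr hw.ne')
  have hn : (0 : ℝ) < (2 * k + 1 : ℕ) := by positivity
  have hsplit : Multiset.range (2 * k + 1) =
      Multiset.range (k + 1) + (Multiset.range k).map (k + 1 + ·) := by
    rw [← Multiset.range_add]
    congr 1
    omega
  refine ⟨_, _, by rw [nthRoots_eq_map_exp (Nat.succ_ne_zero _) hw0, hsplit, Multiset.map_add],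
    by simp, by simp, ?_, ?_⟩
  · simp only [Multiset.mem_map, Multiset.mem_range]
    rintro _ ⟨j, hj, rfl⟩
    have hj : (j : ℝ) ≤ k := by exact_mod_cast Nat.lt_succ_iff.1 hj
    rw [im_exp_log_add_div]
    refine mul_pos (Real.exp_pos _) (Real.sin_pos_of_pos_of_lt_pi (by positivity) ?_)
    rw [div_lt_iff₀ hn]
    push_cast
    nlinarith
  · simp only [Multiset.mem_map, Multiset.mem_range]
    rintro _ ⟨_, ⟨j, hj, rfl⟩, rfl⟩
    have hj : (j : ℝ) + 1 ≤ k := by exact_mod_cast hj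
    rw [im_exp_log_add_div, ← Real.sin_sub_two_pi]
    refine mul_neg_of_pos_of_neg (Real.exp_pos _) (Real.sin_neg_of_neg_of_neg_pi_lt ?_ ?_)
    · rw [sub_neg, div_lt_iff₀ hn]
      push_cast
      nlinarith
    · rw [lt_sub_iff_add_lt, lt_div_iff₀ hn]
      push_cast
      nlinarith [mul_nonneg Real.pi_nonneg j.cast_nonneg]

theorem exists_nthRoots_odd_eq_add {w : ℂ} (hw : w.im ≠ 0) (k : ℕ) :
    ∃ u v : Multiset ℂ, nthRoots (2 * k + 1) w = u + v ∧ u.card = k + 1 ∧ v.card = k ∧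
      (∀ z ∈ u, 0 < w.im * z.im) ∧ ∀ z ∈ v, w.im * z.im < 0 := by
  rcases hw.lt_or_gt with hneg | hpos
  · obtain ⟨u, v, huv, hu, hv, him_u, him_v⟩ := exists_nthRoots_odd_eq_add_of_im_pos
      (w := starRingEnd ℂ w) (by rwa [conj_im, neg_pos]) k
    refine ⟨u.map (starRingEnd ℂ), v.map (starRingEnd ℂ), ?_, by rwa [Multiset.card_map],
      by rwa [Multiset.card_map], ?_, ?_⟩
    · rw [← Multiset.map_add, ← huv, ← nthRoots_conj, conj_conj]
    · simp only [Multiset.forall_mem_map_iff, conj_im]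
      exact fun z hz => mul_pos_of_neg_of_neg hneg (neg_neg_of_pos (him_u z hz))
    · simp only [Multiset.forall_mem_map_iff, conj_im]
      exact fun z hz => mul_neg_of_neg_of_pos hneg (neg_pos.2 (him_v z hz))
  · obtain ⟨u, v, huv, hu, hv, him_u, him_v⟩ := exists_nthRoots_odd_eq_add_of_im_pos hpos k
    exact ⟨u, v, huv, hu, hv, fun z hz => mul_pos hpos (him_u z hz),
      fun z hz => mul_neg_of_pos_of_neg hpos (him_v z hz)⟩

end NthRoots

section Power

open Polynomial

variable {V : Type*} [NormedAddCommGroup V] [InnerProductSpace ℂ V] {S : V →ₗ.[ℂ] V}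
  {s : Multiset ℂ} {w z : ℂ} {n : ℕ}

theorem IsSymmP.zeroRegular_shiftProd (hS : IsSymmP S) (hs : ∀ z ∈ s, z.im ≠ 0) :
    ZeroRegular (shiftProd S s) := by
  induction s using Multiset.induction_on with
  | empty =>
    rw [shiftProd_zero]
    exact ⟨1, one_pos, fun f => (one_mul ‖(f : V)‖).le⟩
  | cons z s ih =>
    rw [Multiset.forall_mem_cons] at hs
    rw [shiftProd_cons]
    exact (hS.zeroRegular_shift hs.1).pcomp (ih hs.2)

variable [CompleteSpace V]

theorem IsSymmP.isClosed_range_shiftProd (hS : IsSymmP S) (hcl : S.IsClosed)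
    (hs : ∀ z ∈ s, z.im ≠ 0) : IsClosed (LinearMap.range (shiftProd S s).toFun : Set V) := by
  induction s using Multiset.induction_on with
  | empty =>
    rw [shiftProd_zero, pid, Submodule.range_subtype]
    exact isClosed_univ
  | cons z s ih =>
    rw [Multiset.forall_mem_cons] at hs
    rw [shiftProd_cons]
    exact (hS.zeroRegular_shift hs.1).isClosed_range_pcomp (isClosed_shift_iff.2 hcl) (ih hs.2)

theorem IsSymmP.rank_quotient_range_shiftProd (hS : IsSymmP S) (hcl : S.IsClosed)
    (hdom : Dense (S.domain : Set V)) (hs : ∀ z ∈ s, z.im ≠ 0) :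
    Module.rank ℂ (V ⧸ LinearMap.range (shiftProd S s).toFun) = (s.map (defectAt S)).sum := by
  induction s using Multiset.induction_on with
  | empty =>
    rw [shiftProd_zero, pid, Submodule.range_subtype, Multiset.map_zero, Multiset.sum_zero]
    exact rank_subsingleton' ..
  | cons z s ih =>
    rw [Multiset.forall_mem_cons] at hs
    rw [shiftProd_cons, rank_quotient_range_pcomp_of_comm
      (hS.zeroRegular_shiftProd hs.2).injective (hS.zeroRegular_shift hs.1).injective
      (pcomp_shift_shiftProd_comm S z s) hdom (hS.isClosed_range_shiftProd hcl hs.2), ih hs.2,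
      Multiset.map_cons, Multiset.sum_cons, defectAt]

theorem IsSymmP.defectAt_pmapPow (hS : IsSymmP S) (hcl : S.IsClosed)
    (hdom : Dense (S.domain : Set V)) (hn : n ≠ 0) (hw : w.im ≠ 0) :
    defectAt (_root_.pmapPow S n) w = ((nthRoots n w).map (defectAt S)).sum := by
  rw [defectAt, ← shiftProd_nthRoots S hn, hS.rank_quotient_range_shiftProd hcl hdom
    fun _ => im_ne_zero_of_mem_nthRoots hn hw]

theorem IsSymmP.defectAt_pmapPow_odd (hS : IsSymmP S) (hcl : S.IsClosed)
    (hdom : Dense (S.domain : Set V)) (hw : w.im ≠ 0) (k : ℕ) :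
    defectAt (_root_.pmapPow S (2 * k + 1)) w =
      (k + 1 : ℕ) * defectAt S w + k * defectAt S (starRingEnd ℂ w) := by
  obtain ⟨u, v, huv, hu, hv, him_u, him_v⟩ := exists_nthRoots_odd_eq_add hw k
  have hsum_u : (u.map (defectAt S)).sum = (k + 1 : ℕ) * defectAt S w := by
    rw [Multiset.map_congr rfl fun z hz => hS.defectAt_eq_of_im_mul_pos hcl (him_u z hz),
      Multiset.map_const', Multiset.sum_replicate, hu, nsmul_eq_mul]
  have hsum_v : (v.map (defectAt S)).sum = k * defectAt S (starRingEnd ℂ w) := by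
    have him (z) (hz : z ∈ v) : 0 < (starRingEnd ℂ w).im * z.im := by
      rw [Complex.conj_im, neg_mul, neg_pos]
      exact him_v z hz
    rw [Multiset.map_congr rfl fun z hz => hS.defectAt_eq_of_im_mul_pos hcl (him z hz),
      Multiset.map_const', Multiset.sum_replicate, hv, nsmul_eq_mul]
  rw [hS.defectAt_pmapPow hcl hdom (Nat.succ_ne_zero _) hw, huv, Multiset.map_add,
    Multiset.sum_add, hsum_u, hsum_v]

theorem IsSymmP.isClosed_pmapPow (hS : IsSymmP S) (hcl : S.IsClosed) (hn : n ≠ 0) :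
    (_root_.pmapPow S n).IsClosed := by
  have hroots (z) (hz : z ∈ nthRoots n Complex.I) : z.im ≠ 0 :=
    im_ne_zero_of_mem_nthRoots hn (by rw [Complex.I_im]; exact one_ne_zero) hz
  rw [← isClosed_shift_iff (z := Complex.I), ← shiftProd_nthRoots S hn]
  exact (hS.zeroRegular_shiftProd hroots).isClosed_of_isClosed_range
    (hS.isClosed_range_shiftProd hcl hroots)

theorem IsSymmP.dense_domain_pmapPow (hS : IsSymmP S) (hcl : S.IsClosed)
    (hdom : Dense (S.domain : Set V)) (hz : z.im ≠ 0) (hfin : defectAt S z < ℵ₀) (n : ℕ) :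
    Dense ((_root_.pmapPow S n).domain : Set V) := by
  have hpow (m : ℕ) : (_root_.pmapPow S m).domain = powDomain S m := by
    rw [pmapPow_eq_paeval, paeval, LinearMap.toPMap_domain, natDegree_X_pow]
  induction n with
  | zero => exact dense_univ
  | succ n ih =>
    have hdeg : (X ^ n * (X - C z)).natDegree = n + 1 := by
      rw [natDegree_X_pow_mul n (X_sub_C_ne_zero z), natDegree_X_sub_C, add_comm]
    have hfactor : (pcomp (_root_.pmapPow S n) (shift S z)).domain = powDomain S (n + 1) := by
      rw [pmapPow_eq_paeval, ← paeval_X_sub_C,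
        pcomp_paeval (pow_ne_zero n X_ne_zero) (X_sub_C_ne_zero z), paeval,
        LinearMap.toPMap_domain, hdeg]
    rw [hpow, ← hfactor]
    exact (hS.zeroRegular_shift hz).dense_domain_pcomp hdom ih (hS.isClosed_range_shift hcl hz)
      (Module.rank_lt_aleph0_iff.1 hfin)

end Power

section DeficiencyIndices

theorem IsSymmP.nPlus_eq_defectAt {S : H →ₗ.[ℂ] H} (hS : IsSymmP S) (hcl : S.IsClosed)
    (hdom : Dense (S.domain : Set H)) : nPlus S = defectAt S (-Complex.I) := by
  rw [nPlus, ← rank_kerAt_adjoint hdom (hS.isClosed_range_shift hcl (by simp)), map_neg,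
    Complex.conj_I, neg_neg]

theorem IsSymmP.nMinus_eq_defectAt {S : H →ₗ.[ℂ] H} (hS : IsSymmP S) (hcl : S.IsClosed)
    (hdom : Dense (S.domain : Set H)) : nMinus S = defectAt S Complex.I := by
  rw [nMinus, ← rank_kerAt_adjoint hdom (hS.isClosed_range_shift hcl (by simp)), Complex.conj_I]

end DeficiencyIndices

theorem odd_powers_deficiency_finite_general (S : H →ₗ.[ℂ] H)
    (hd : Dense (S.domain : Set H)) (hc : S.IsClosed) (hsym : IsSymmP S)
    (hfin : nPlus S < ℵ₀ ∨ nMinus S < ℵ₀) (k : ℕ) :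
    Dense (((pmapPow S (2 * k + 1)).domain : Submodule ℂ H) : Set H) ∧
    IsSymmP (pmapPow S (2 * k + 1)) ∧ (pmapPow S (2 * k + 1)).IsClosed ∧
    (∀ f : (pmapPow S (2 * k + 1)).domain,
      ‖pmapPow S (2 * k + 1) f + Complex.I • (f : H)‖ ≥ ‖(f : H)‖ ∧
      ‖pmapPow S (2 * k + 1) f - Complex.I • (f : H)‖ ≥ ‖(f : H)‖) ∧
    nPlus (pmapPow S (2 * k + 1)) = (k : Cardinal) * (nPlus S + nMinus S) + nPlus S ∧
    nMinus (pmapPow S (2 * k + 1)) = (k : Cardinal) * (nPlus S + nMinus S) + nMinus S := by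
  have hplus := hsym.nPlus_eq_defectAt hc hd
  have hminus := hsym.nMinus_eq_defectAt hc hd
  have hdom : Dense ((pmapPow S (2 * k + 1)).domain : Set H) := by
    rcases hfin with h | h
    · exact hsym.dense_domain_pmapPow hc hd (by simp) (hplus ▸ h) _
    · exact hsym.dense_domain_pmapPow hc hd (by simp) (hminus ▸ h) _
  have hsymm := hsym.pmapPow (2 * k + 1)
  have hclosed := hsym.isClosed_pmapPow hc (Nat.succ_ne_zero (2 * k))
  refine ⟨hdom, hsymm, hclosed, fun f => ⟨?_, ?_⟩, ?_, ?_⟩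
  · simpa using hsymm.abs_im_mul_norm_le (-Complex.I) f
  · simpa using hsymm.abs_im_mul_norm_le Complex.I f
  · rw [hsymm.nPlus_eq_defectAt hclosed hdom, hsym.defectAt_pmapPow_odd hc hd (by simp), map_neg,
      Complex.conj_I, neg_neg, ← hplus, ← hminus, Nat.cast_succ]
    ring
  · rw [hsymm.nMinus_eq_defectAt hclosed hdom, hsym.defectAt_pmapPow_odd hc hd (by simp),
      Complex.conj_I, ← hplus, ← hminus, Nat.cast_succ]
    ring

/-- Odd powers of a densely defined, closed, symmetric operator with finite deficiency
indices: `S^{2k+1}` is densely defined, symmetric, closed,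
`‖S^{2k+1} f ± i f‖ ≥ ‖f‖` on its domain, and
`n₊(S^{2k+1}) = k(n₊(S)+n₋(S)) + n₊(S)`, `n₋(S^{2k+1}) = k(n₊(S)+n₋(S)) + n₋(S)`. -/
theorem odd_powers_deficiency_finite (S : H →ₗ.[ℂ] H)
    (hd : Dense (S.domain : Set H)) (hc : S.IsClosed) (hsym : IsSymmP S)
    (hp : nPlus S < ℵ₀) (hm : nMinus S < ℵ₀) (k : ℕ) (hk : 1 ≤ k) :
    Dense (((pmapPow S (2 * k + 1)).domain : Submodule ℂ H) : Set H) ∧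
    IsSymmP (pmapPow S (2 * k + 1)) ∧ (pmapPow S (2 * k + 1)).IsClosed ∧
    (∀ f : (pmapPow S (2 * k + 1)).domain,
      ‖pmapPow S (2 * k + 1) f + Complex.I • (f : H)‖ ≥ ‖(f : H)‖ ∧
      ‖pmapPow S (2 * k + 1) f - Complex.I • (f : H)‖ ≥ ‖(f : H)‖) ∧
    nPlus (pmapPow S (2 * k + 1)) = (k : Cardinal) * (nPlus S + nMinus S) + nPlus S ∧
    nMinus (pmapPow S (2 * k + 1)) = (k : Cardinal) * (nPlus S + nMinus S) + nMinus S := by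
  exact odd_powers_deficiency_finite_general S hd hc hsym (.inl hp) k
end
end

section
/- Let P be a polynomial of even degree m = 2k (k ≥ 1) with real coefficients, positive leading coefficient, and m distinct real roots, regarded as a polynomial over ℂ. Then there exists ε₀ > 0 such that for all ε ∈ (0, ε₀), each of the polynomials P − iε and P + iε has exactly k roots, counted with multiplicity, in the open upper half-plane ℂ₊ = {z ∈ ℂ : Im z > 0} and exactly k roots, counted with multiplicity, in the open lower half-plane ℂ₋ = {z ∈ ℂ : Im z < 0}, and all of these roots are simple. -/
open Polynomial

noncomputable section

/-- The number of roots (counted with multiplicity) of `Q` in the open upper half-plane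
`ℂ₊ = {z : ℂ | 0 < Im z}`. -/
def countUpper (Q : Polynomial ℂ) : ℕ := (Q.roots.filter fun z => 0 < z.im).card

/-- The number of roots (counted with multiplicity) of `Q` in the open lower half-plane
`ℂ₋ = {z : ℂ | Im z < 0}`. -/
def countLower (Q : Polynomial ℂ) : ℕ := (Q.roots.filter fun z => z.im < 0).card

/-- All roots of `Q` are simple (multiplicity one). -/
def allSimpleRoots (Q : Polynomial ℂ) : Prop := ∀ z ∈ Q.roots, Q.rootMultiplicity z = 1

/-! Let `x` be a simple real root of `P`. By the inverse function theorem it continues to a root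
`z(ε) = x + ε w / P'(x) + o(ε)` of `P - ε w`, so for small `ε > 0` the sign of `Im z(ε)` is that of
`Im w * P'(x)`. If `P` has only simple real roots, these continuations stay distinct, hence exhaust
the roots of `P - ε w` by degree. The sign of `P'` alternates along the roots, so the continuations
of neighbouring roots leave the real line on opposite sides.
-/

open Complex Filter Finset Topology

lemma count_even (n : ℕ) : Nat.count Even n = (n + 1) / 2 := by
  induction n with
  | zero => simp
  | succ n ih => rw [Nat.count_succ, ih]; grind

lemma count_not_even (n : ℕ) : Nat.count (¬Even ·) n = n / 2 := by
  induction n with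
  | zero => simp
  | succ n ih => rw [Nat.count_succ, ih]; grind

lemma card_filter_card_filter_lt {α : Type*} [LinearOrder α] (p : ℕ → Prop) [DecidablePred p]
    (s : Finset α) : #{x ∈ s | p #{y ∈ s | x < y}} = Nat.count p #s := by
  induction s using Finset.induction_on_min with
  | empty => simp
  | insert a s ha ih =>
    have ha_notMem : a ∉ s := fun h ↦ lt_irrefl a (ha a h)
    have rank_min : #{y ∈ insert a s | a < y} = #s := by
      rw [filter_insert, if_neg (lt_irrefl a), filter_true_of_mem ha]
    have rank_of_mem : ∀ x ∈ s, #{y ∈ insert a s | x < y} = #{y ∈ s | x < y} := fun x hx ↦ by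
      rw [filter_insert, if_neg (ha x hx).not_gt]
    rw [filter_insert, rank_min, filter_congr fun x hx ↦ by rw [rank_of_mem x hx],
      card_insert_of_notMem ha_notMem, Nat.count_succ, ← ih]
    split_ifs with hp
    · rw [card_insert_of_notMem (fun h ↦ ha_notMem (mem_of_mem_filter a h))]
    · rfl

section SignOfProduct

variable {R : Type*} [CommRing R] [LinearOrder R] [IsStrictOrderedRing R]

lemma neg_one_pow_pos_iff {n : ℕ} : 0 < (-1 : R) ^ n ↔ Even n := by
  rcases n.even_or_odd with hn | hn
  · simp [hn]
  · simp [hn.neg_one_pow, Nat.not_even_iff_odd.2 hn, zero_le_one.not_gt]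

lemma neg_one_pow_neg_iff {n : ℕ} : (-1 : R) ^ n < 0 ↔ Odd n := by
  rcases n.even_or_odd with hn | hn
  · simp [hn.neg_one_pow, Nat.not_odd_iff_even.2 hn, zero_le_one.not_gt]
  · simp [hn]

lemma neg_one_pow_mul_prod_sub_pos {x : R} {s : Finset R} (hx : x ∉ s) :
    0 < (-1) ^ #{y ∈ s | x < y} * ∏ y ∈ s, (x - y) := by
  have hsign : (-1 : R) ^ #{y ∈ s | x < y} = ∏ y ∈ s, if x < y then -1 else 1 := by
    simp only [prod_ite, prod_const, one_pow, mul_one]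
  rw [hsign, ← prod_mul_distrib]
  refine prod_pos fun y hy ↦ ?_
  split_ifs with hxy
  · simpa using hxy
  · simpa using (not_lt.1 hxy).lt_of_ne fun h ↦ hx (h ▸ hy)

end SignOfProduct

lemma eval_derivative_of_mem_roots {R : Type*} [CommRing R] [IsDomain R] [DecidableEq R]
    {P : R[X]} (hP : P.Splits) {x : R} (hx : x ∈ P.roots) :
    P.derivative.eval x = P.leadingCoeff * ((P.roots.erase x).map (x - ·)).prod := by
  conv_lhs => rw [hP.eq_prod_roots, derivative_C_mul, eval_C_mul,
    eval_multiset_prod_X_sub_C_derivative hx]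

section SignOfDerivative

variable {R : Type*} [CommRing R] [LinearOrder R] [IsStrictOrderedRing R] {P : R[X]} {c : R}

lemma neg_one_pow_mul_eval_derivative_pos (hsplit : P.Splits) (hnodup : P.roots.Nodup)
    (hc : 0 < c * P.leadingCoeff) {x : R} (hx : x ∈ P.roots) :
    0 < (-1) ^ #{y ∈ P.roots.toFinset | x < y} * (c * P.derivative.eval x) := by
  set s := P.roots.toFinset
  have hderiv : P.derivative.eval x = P.leadingCoeff * ∏ y ∈ s.erase x, (x - y) := by
    rw [eval_derivative_of_mem_roots hsplit hx, prod_eq_multiset_prod, erase_val,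
      Multiset.toFinset_val, hnodup.dedup]
  have hrank : #{y ∈ s.erase x | x < y} = #{y ∈ s | x < y} := by
    rw [filter_erase, erase_eq_of_notMem (by simp)]
  have hprod := neg_one_pow_mul_prod_sub_pos (notMem_erase x s)
  calc
    0 < c * P.leadingCoeff * ((-1) ^ #{y ∈ s.erase x | x < y} * ∏ y ∈ s.erase x, (x - y)) :=
      mul_pos hc hprod
    _ = (-1) ^ #{y ∈ s | x < y} * (c * P.derivative.eval x) := by rw [hderiv, hrank]; ring

lemma card_filter_mul_eval_derivative_pos (hsplit : P.Splits) (hnodup : P.roots.Nodup)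
    (hc : 0 < c * P.leadingCoeff) :
    #{x ∈ P.roots.toFinset | 0 < c * P.derivative.eval x} = (P.natDegree + 1) / 2 := by
  rw [hsplit.natDegree_eq_card_roots, ← Multiset.toFinset_card_of_nodup hnodup, ← count_even,
    ← card_filter_card_filter_lt]
  refine congrArg card (filter_congr fun x hx ↦ ?_)
  rw [← neg_one_pow_pos_iff (R := R)]
  exact (pos_iff_pos_of_mul_pos (neg_one_pow_mul_eval_derivative_pos hsplit hnodup hc
    (Multiset.mem_toFinset.1 hx))).symm

lemma card_filter_mul_eval_derivative_neg (hsplit : P.Splits) (hnodup : P.roots.Nodup)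
    (hc : 0 < c * P.leadingCoeff) :
    #{x ∈ P.roots.toFinset | c * P.derivative.eval x < 0} = P.natDegree / 2 := by
  rw [hsplit.natDegree_eq_card_roots, ← Multiset.toFinset_card_of_nodup hnodup, ← count_not_even,
    ← card_filter_card_filter_lt]
  refine congrArg card (filter_congr fun x hx ↦ ?_)
  rw [Nat.not_even_iff_odd, ← neg_one_pow_neg_iff (R := R)]
  exact (neg_iff_neg_of_mul_pos (neg_one_pow_mul_eval_derivative_pos hsplit hnodup hc
    (Multiset.mem_toFinset.1 hx))).symm

end SignOfDerivative

lemma exists_hasDerivAt_root_branch {𝕜 : Type*} [NontriviallyNormedField 𝕜] [CompleteSpace 𝕜]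
    {Q : 𝕜[X]} {z : 𝕜} (hz : Q.IsRoot z) (hd : Q.derivative.eval z ≠ 0) (w : 𝕜) :
    ∃ g : 𝕜 → 𝕜, g 0 = z ∧ HasDerivAt g (w / Q.derivative.eval z) 0 ∧
      ∀ᶠ u in 𝓝 0, Q.eval (g u) = u * w := by
  have hQ := Q.hasStrictDerivAt z
  set inv := hQ.localInverse _ _ _ hd
  have inv_zero : inv 0 = z := hz ▸ (hQ.eventually_left_inverse hd).self_of_nhds
  have hinv : HasDerivAt inv (Q.derivative.eval z)⁻¹ 0 := hz ▸ (hQ.to_localInverse hd).hasDerivAt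
  have eval_inv : ∀ᶠ v in 𝓝 0, Q.eval (inv v) = v := hz ▸ hQ.eventually_right_inverse hd
  refine ⟨fun u ↦ inv (u * w), by simp [inv_zero], ?_, ?_⟩
  · rw [div_eq_inv_mul]
    exact HasDerivAt.comp 0 (by rwa [zero_mul]) (hasDerivAt_mul_const w)
  · exact ((continuous_mul_const w).tendsto' 0 0 (zero_mul w)).eventually eval_inv

lemma eventually_mul_deriv_pos {u : ℝ → ℝ} {u' a : ℝ} (hu : HasDerivAt u u' a) (ha : u a = 0)
    (hu' : u' ≠ 0) : ∀ᶠ t in 𝓝[>] a, 0 < u t * u' := by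
  have hpos : 0 < deriv (fun t ↦ u t * u') a := by
    rw [(hu.mul_const u').deriv]
    exact mul_self_pos.2 hu'
  have sign_eq := eventually_nhdsWithin_sign_eq_of_deriv_pos hpos (by simp [ha])
  filter_upwards [nhdsWithin_le_nhds sign_eq, self_mem_nhdsWithin] with t hsign ht
  rwa [sign_pos (sub_pos.2 ht), sign_eq_one_iff] at hsign

lemma exists_root_branch_of_real_root {P : ℝ[X]} {x : ℝ} (hx : P.IsRoot x)
    (hd : P.derivative.eval x ≠ 0) {w : ℂ} (hw : w.im ≠ 0) :
    ∃ g : ℝ → ℂ, Tendsto g (𝓝[>] 0) (𝓝 x) ∧ ∀ᶠ ε : ℝ in 𝓝[>] 0,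
      (P.map (algebraMap ℝ ℂ)).eval (g ε) = ε * w ∧
      0 < (g ε).im * (w.im * P.derivative.eval x) := by
  have eval_real (Q : ℝ[X]) : (Q.map (algebraMap ℝ ℂ)).eval (x : ℂ) = Q.eval x :=
    eval_map_apply (algebraMap ℝ ℂ) x
  obtain ⟨g, g_zero, hg, eval_g⟩ := exists_hasDerivAt_root_branch
    (Q := P.map (algebraMap ℝ ℂ)) (z := x) (by simp [IsRoot, eval_real, hx.eq_zero])
    (by simpa [derivative_map, eval_real] using hd) w
  have hg_real : HasDerivAt (fun ε : ℝ ↦ g ε) (w / P.derivative.eval x) 0 := by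
    rw [derivative_map, eval_real] at hg
    exact HasDerivAt.comp_ofReal (by rwa [ofReal_zero])
  have hg_im : HasDerivAt (fun ε : ℝ ↦ (g ε).im) (w.im / P.derivative.eval x) 0 := by
    have := imCLM.hasFDerivAt.comp_hasDerivAt (0 : ℝ) hg_real
    rwa [imCLM_apply, div_ofReal_im] at this
  have ofReal_tendsto : Tendsto ((↑) : ℝ → ℂ) (𝓝[>] 0) (𝓝 0) :=
    (continuous_ofReal.tendsto' 0 0 ofReal_zero).mono_left nhdsWithin_le_nhds
  refine ⟨fun ε ↦ g ε, g_zero ▸ hg.continuousAt.tendsto.comp ofReal_tendsto, ?_⟩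
  filter_upwards [ofReal_tendsto.eventually eval_g,
    eventually_mul_deriv_pos hg_im (by simp [g_zero]) (div_ne_zero hw hd)] with ε heval him
  refine ⟨heval, ?_⟩
  calc
    0 < (g ε).im * (w.im / P.derivative.eval x) * P.derivative.eval x ^ 2 :=
      mul_pos him (by positivity)
    _ = (g ε).im * (w.im * P.derivative.eval x) := by field_simp

lemma eventually_injOn_of_tendsto {ι α β : Type*} [TopologicalSpace β] [T2Space β] {l : Filter ι}
    {s : Finset α} {g : α → ι → β} {b : α → β} (hg : ∀ a ∈ s, Tendsto (g a) l (𝓝 (b a)))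
    (hb : Set.InjOn b s) : ∀ᶠ i in l, Set.InjOn (g · i) s := by
  have hne : ∀ a ∈ s, ∀ a' ∈ s, ∀ᶠ i in l, g a i = g a' i → a = a' := fun a ha a' ha' ↦ by
    by_cases haa' : a = a'
    · simp [haa']
    · filter_upwards [((hg a ha).prodMk_nhds (hg a' ha')).eventually
        (isClosed_diagonal.isOpen_compl.mem_nhds (hb.ne ha ha' haa'))] with i hi h
      exact absurd h hi
  filter_upwards [(eventually_all_finset s).2 fun a ha ↦ (eventually_all_finset s).2 (hne a ha)]
    with i hi a ha a' ha' using hi a ha a' ha'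

lemma map_sub_C_ne_zero (P : ℝ[X]) {u : ℂ} (hu : u.im ≠ 0) :
    P.map (algebraMap ℝ ℂ) - C u ≠ 0 := fun h ↦ by
  have := congrArg (fun Q ↦ (Q.coeff 0).im) h
  simp [hu] at this

lemma eventually_exists_roots_eq {P : ℝ[X]} (hsplit : P.Splits) (hsep : P.Separable) {w : ℂ}
    (hw : w.im ≠ 0) :
    ∀ᶠ ε : ℝ in 𝓝[>] 0, ∃ z : ℝ → ℂ, Set.InjOn z P.roots.toFinset ∧
      (P.map (algebraMap ℝ ℂ) - C (ε * w)).roots = P.roots.toFinset.val.map z ∧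
      ∀ x ∈ P.roots.toFinset, 0 < (z x).im * (w.im * P.derivative.eval x) := by
  set s := P.roots.toFinset
  have hroot : ∀ x ∈ s, P.IsRoot x := fun x hx ↦ isRoot_of_mem_roots (Multiset.mem_toFinset.1 hx)
  have hderiv : ∀ x ∈ s, P.derivative.eval x ≠ 0 := fun x hx ↦ by
    simpa using hsep.aeval_derivative_ne_zero (x := x) (by simpa using hroot x hx)
  choose! g g_tendsto g_spec using fun x hx ↦
    exists_root_branch_of_real_root (hroot x hx) (hderiv x hx) hw
  filter_upwards [eventually_injOn_of_tendsto g_tendsto ofReal_injective.injOn,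
    (eventually_all_finset s).2 g_spec, self_mem_nhdsWithin] with ε hinj hspec hε
  refine ⟨(g · ε), hinj, ?_, fun x hx ↦ (hspec x hx).2⟩
  rw [← image_val_of_injOn hinj]
  refine roots_eq_of_natDegree_le_card_of_ne_zero ?_ ?_ (map_sub_C_ne_zero P ?_)
  · simpa [sub_eq_zero] using fun x hx ↦ (hspec x hx).1
  · rw [natDegree_sub_C, natDegree_map, card_image_of_injOn hinj,
      Multiset.toFinset_card_of_nodup (nodup_roots hsep), hsplit.natDegree_eq_card_roots]
  · simpa using ⟨(Set.mem_Ioi.1 hε).ne', hw⟩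

lemma allSimpleRoots_of_nodup_roots {Q : ℂ[X]} (hQ : Q.roots.Nodup) : allSimpleRoots Q :=
  fun _ hz ↦ by rw [← count_roots, Multiset.count_eq_one_of_mem hQ hz]

lemma eventually_countUpper_countLower {P : ℝ[X]} (hsplit : P.Splits) (hsep : P.Separable) {w : ℂ}
    (hw : w.im ≠ 0) :
    ∀ᶠ ε : ℝ in 𝓝[>] 0,
      countUpper (P.map (algebraMap ℝ ℂ) - C (ε * w)) =
        #{x ∈ P.roots.toFinset | 0 < w.im * P.derivative.eval x} ∧
      countLower (P.map (algebraMap ℝ ℂ) - C (ε * w)) =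
        #{x ∈ P.roots.toFinset | w.im * P.derivative.eval x < 0} ∧
      allSimpleRoots (P.map (algebraMap ℝ ℂ) - C (ε * w)) := by
  filter_upwards [eventually_exists_roots_eq hsplit hsep hw] with ε ⟨z, hinj, hroots, him⟩
  refine ⟨?_, ?_, allSimpleRoots_of_nodup_roots (hroots ▸ nodup_map_iff_injOn.2 hinj)⟩
  · rw [countUpper, hroots, Multiset.filter_map, Multiset.card_map]
    exact congrArg card (filter_congr fun x hx ↦ pos_iff_pos_of_mul_pos (him x hx))
  · rw [countLower, hroots, Multiset.filter_map, Multiset.card_map]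
    exact congrArg card (filter_congr fun x hx ↦ neg_iff_neg_of_mul_pos (him x hx))

theorem perturbed_roots_even_general {P : ℝ[X]} (hsplit : P.Splits) (hsep : P.Separable) {w : ℂ}
    (hw : 0 < w.im * P.leadingCoeff) :
    ∃ ε₀ : ℝ, 0 < ε₀ ∧ ∀ ε : ℝ, 0 < ε → ε < ε₀ →
      (countUpper (P.map (algebraMap ℝ ℂ) - C (ε * w)) = (P.natDegree + 1) / 2 ∧
       countLower (P.map (algebraMap ℝ ℂ) - C (ε * w)) = P.natDegree / 2 ∧
       allSimpleRoots (P.map (algebraMap ℝ ℂ) - C (ε * w))) ∧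
      (countUpper (P.map (algebraMap ℝ ℂ) + C (ε * w)) = P.natDegree / 2 ∧
       countLower (P.map (algebraMap ℝ ℂ) + C (ε * w)) = (P.natDegree + 1) / 2 ∧
       allSimpleRoots (P.map (algebraMap ℝ ℂ) + C (ε * w))) := by
  have hw_im : w.im ≠ 0 := left_ne_zero_of_mul hw.ne'
  have hminus := eventually_countUpper_countLower hsplit hsep hw_im
  have hplus := eventually_countUpper_countLower hsplit hsep (w := -w) (by simpa using hw_im)
  obtain ⟨ε₀, hε₀, h⟩ := mem_nhdsGT_iff_exists_Ioo_subset.1 (hminus.and hplus)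
  refine ⟨ε₀, hε₀, fun ε hε hlt ↦ ?_⟩
  simpa [card_filter_mul_eval_derivative_pos hsplit (nodup_roots hsep) hw,
    card_filter_mul_eval_derivative_neg hsplit (nodup_roots hsep) hw] using h ⟨hε, hlt⟩

/-- For a real polynomial `P` of even degree `m = 2k` with positive leading coefficient
and `m` distinct real roots, for all sufficiently small `ε > 0` both `P - iε` and
`P + iε` have exactly `k` roots (with multiplicity) in the open upper half-plane and
exactly `k` roots in the open lower half-plane, all of them simple. -/
theorem perturbed_roots_even (P : Polynomial ℝ) (k : ℕ) (hk : 1 ≤ k)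
    (hdeg : P.natDegree = 2 * k) (hlead : 0 < P.leadingCoeff)
    (hcard : P.roots.card = 2 * k) (hnodup : P.roots.Nodup) :
    ∃ ε₀ : ℝ, 0 < ε₀ ∧ ∀ ε : ℝ, 0 < ε → ε < ε₀ →
      (countUpper (P.map (algebraMap ℝ ℂ) - Polynomial.C ((ε : ℂ) * Complex.I)) = k ∧
       countLower (P.map (algebraMap ℝ ℂ) - Polynomial.C ((ε : ℂ) * Complex.I)) = k ∧
       allSimpleRoots (P.map (algebraMap ℝ ℂ) - Polynomial.C ((ε : ℂ) * Complex.I))) ∧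
      (countUpper (P.map (algebraMap ℝ ℂ) + Polynomial.C ((ε : ℂ) * Complex.I)) = k ∧
       countLower (P.map (algebraMap ℝ ℂ) + Polynomial.C ((ε : ℂ) * Complex.I)) = k ∧
       allSimpleRoots (P.map (algebraMap ℝ ℂ) + Polynomial.C ((ε : ℂ) * Complex.I))) := by
  have hsplit : P.Splits := splits_iff_card_roots.2 (hcard.trans hdeg.symm)
  have hsep : P.Separable :=
    (nodup_roots_iff_of_splits (leadingCoeff_ne_zero.1 hlead.ne') hsplit).1 hnodup
  simpa [hdeg, Nat.mul_add_div] using perturbed_roots_even_general hsplit hsep (w := I) (by simpa)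
end
end
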